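/- For all c > 0 and δ > 0 there exists N such that for all n ≥ N and all families a : Fin n → ℝ of positive reals whose subset sums are 1-separated and whose maximum A = max_i a_i satisfies A² ≤ c · n^{−1/2} · ∑_{i=1}^{n} a_i², one has | ∫_ℝ (F(x) − γ(x))² dx − ∫_{|x| ≥ 1/(4A)} (sin(2πx)/(2πx))² · ∏_{i=1}^{n} cos(2π a_i x)² dx | ≤ δ · 2^{−n}, where F = h*μ is the smoothed random-walk density and γ is the comparison Gaussian density. -/

import Mathlib

open Real MeasureTheory Finset

/-- The factor `sin(2πx)/(2πx)`, interpreted as its limit value `1` at `x = 0`. -/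
noncomputable def sinc2pi (x : ℝ) : ℝ :=
  if x = 0 then 1 else Real.sin (2 * π * x) / (2 * π * x)

/-- The subset sums of the family `a` are 1-separated. -/
def SepSums {n : ℕ} (a : Fin n → ℝ) : Prop :=
  ∀ S T : Finset (Fin n), S ≠ T → 1 ≤ |∑ i ∈ S, a i - ∑ i ∈ T, a i|

/-- The signed sum `S_ε = ∑ i, ε_i a_i` for a sign vector `ε` (encoded by booleans,
`true ↦ +1`, `false ↦ -1`). -/
def signedSum {n : ℕ} (a : Fin n → ℝ) (ε : Fin n → Bool) : ℝ :=
  ∑ i, if ε i then a i else -a i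

/-- The smoothed random-walk density `F = h * μ`:
`F(x) = 2^{-n} ∑_{ε ∈ {−1,1}^n} (1/2)·𝟙_{[S_ε − 1, S_ε + 1]}(x)`. -/
noncomputable def smoothedDensity {n : ℕ} (a : Fin n → ℝ) (x : ℝ) : ℝ :=
  (1 / 2 ^ n) * ∑ ε : Fin n → Bool,
    (1 / 2) * Set.indicator (Set.Icc (signedSum a ε - 1) (signedSum a ε + 1))
      (fun _ => (1 : ℝ)) x

/-- The comparison Gaussian density
`γ(x) = (2π ∑ a_i²)^{−1/2} · exp(−x²/(2 ∑ a_i²))`. -/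
noncomputable def gaussianDensity {n : ℕ} (a : Fin n → ℝ) (x : ℝ) : ℝ :=
  (Real.sqrt (2 * π * ∑ i, (a i) ^ 2))⁻¹ *
    Real.exp (-x ^ 2 / (2 * ∑ i, (a i) ^ 2))

/-!
By Plancherel, `∫ (F - γ)²` is the integral of `(φ(u) - e^{-V u² / 2})²` at `u = 2πx`, where
`φ(u) = sinc u · ∏ cos (a_i u)` and `V = ∑ a_i²`.

Where `A |u| ≤ π / 2`, each `cos t · e^{t² / 2}` with `t = a_i u` lies between `1 - t⁴ / 4` and `1`,
so the difference is `O((A² / V) e^{-V u² / 4})`. Where `A |u| ≥ π / 2` we have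
`A² / V · V u² ≥ 1`, so replacing the difference by `φ(u)` costs only
`O(e^{-V u² / 2}) = O((A² / V)² e^{-V u² / 4})`. Integrating, the total error is
`O((A² / V)² V^{-1/2})`, where `A² / V = O(n^{-1/2})`.

Finally the signed sums are `2`-separated, so at least half of the `2ⁿ` of them are at least
`2ⁿ⁻¹` in absolute value; as their mean square is `V`, this gives `V ≥ 4ⁿ / 8`, that is
`V^{-1/2} = O(2⁻ⁿ)`.
-/

open scoped FourierTransform ContDiff

section Plancherel

variable {E F : Type*} [NormedAddCommGroup E] [InnerProductSpace ℝ E] [FiniteDimensional ℝ E]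
  [MeasurableSpace E] [BorelSpace E] [NormedAddCommGroup F] [InnerProductSpace ℂ F]
  [CompleteSpace F] {f : E → F}

lemma integral_schwartz_smul_fourier_toLp (hf : Integrable f) (hf2 : MemLp f 2)
    (g : SchwartzMap E ℂ) :
    ∫ w, g w • (𝓕 (hf2.toLp f) : E →₂[volume] F) w = ∫ w, g w • 𝓕 f w :=
  calc ∫ w, g w • (𝓕 (hf2.toLp f) : E →₂[volume] F) w
    _ = Lp.toTemperedDistribution (𝓕 (hf2.toLp f) : E →₂[volume] F) g :=
        (Lp.toTemperedDistribution_apply _ g).symm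
    _ = Lp.toTemperedDistribution (hf2.toLp f) (𝓕 g) := by
        rw [← Lp.fourier_toTemperedDistribution_eq, TemperedDistribution.fourier_apply]
    _ = ∫ w, 𝓕 g w • hf2.toLp f w := Lp.toTemperedDistribution_apply _ _
    _ = ∫ w, 𝓕 (g : E → ℂ) w • f w := by
        refine integral_congr_ae ?_
        filter_upwards [hf2.coeFn_toLp] with w hw
        rw [hw, SchwartzMap.fourier_coe]
    _ = ∫ w, g w • 𝓕 f w := by
        simpa using! VectorFourier.integral_fourierIntegral_smul_eq_flip (L := innerₗ E)
          continuous_fourierChar continuous_inner g.integrable hf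

lemma coeFn_fourier_toLp_ae_eq (hf : Integrable f) (hf2 : MemLp f 2) :
    (𝓕 (hf2.toLp f) : E →₂[volume] F) =ᵐ[volume] 𝓕 f := by
  have hcont : Continuous (𝓕 f) :=
    VectorFourier.fourierIntegral_continuous continuous_fourierChar continuous_inner hf
  refine ae_eq_of_integral_contDiff_smul_eq ((Lp.memLp _).locallyIntegrable one_le_two)
    hcont.locallyIntegrable fun g hg hg_supp ↦ ?_
  have hg_supp' : HasCompactSupport (Complex.ofRealCLM ∘ g) := hg_supp.comp_left rfl
  have hg' : ContDiff ℝ ∞ (Complex.ofRealCLM ∘ g) := by fun_prop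
  simpa using integral_schwartz_smul_fourier_toLp hf hf2 (hg_supp'.toSchwartzMap hg')

lemma memLp_two_fourier (hf : Integrable f) (hf2 : MemLp f 2) : MemLp (𝓕 f) 2 :=
  (memLp_congr_ae (coeFn_fourier_toLp_ae_eq hf hf2)).1 (Lp.memLp _)

lemma integral_inner_fourier {g : E → F} (hf : Integrable f) (hf2 : MemLp f 2) (hg : Integrable g)
    (hg2 : MemLp g 2) :
    ∫ w, inner ℂ (𝓕 f w) (𝓕 g w) = ∫ x, inner ℂ (f x) (g x) :=
  calc ∫ w, inner ℂ (𝓕 f w) (𝓕 g w)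
    _ = inner ℂ (𝓕 (hf2.toLp f)) (𝓕 (hg2.toLp g)) := by
        rw [L2.inner_def]
        refine integral_congr_ae ?_
        filter_upwards [coeFn_fourier_toLp_ae_eq hf hf2, coeFn_fourier_toLp_ae_eq hg hg2]
          with w hfw hgw
        rw [hfw, hgw]
    _ = inner ℂ (hf2.toLp f) (hg2.toLp g) := Lp.inner_fourier_eq _ _
    _ = ∫ x, inner ℂ (f x) (g x) := by
        rw [L2.inner_def]
        refine integral_congr_ae ?_
        filter_upwards [hf2.coeFn_toLp, hg2.coeFn_toLp] with x hfx hgx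
        rw [hfx, hgx]

lemma integral_norm_sq_fourier (hf : Integrable f) (hf2 : MemLp f 2) :
    ∫ w, ‖𝓕 f w‖ ^ 2 = ∫ x, ‖f x‖ ^ 2 := by
  apply Complex.ofRealLI.injective
  simpa [← LinearIsometry.integral_comp_comm, inner_self_eq_norm_sq_to_K] using
    integral_inner_fourier hf hf2 hf hf2

end Plancherel

section Linearity

variable {E F : Type*} [NormedAddCommGroup E] [InnerProductSpace ℝ E] [FiniteDimensional ℝ E]
  [MeasurableSpace E] [BorelSpace E] [NormedAddCommGroup F] [NormedSpace ℂ F]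

lemma fourier_fun_sub {f g : E → F} (hf : Integrable f) (hg : Integrable g) (w : E) :
    𝓕 (fun x ↦ f x - g x) w = 𝓕 f w - 𝓕 g w := by
  simp only [Real.fourier_eq, smul_sub]
  exact integral_sub ((fourierIntegral_convergent_iff w).2 hf)
    ((fourierIntegral_convergent_iff w).2 hg)

lemma fourier_const_smul_finset_sum {ι : Type*} (s : Finset ι) (c : ℂ) {f : ι → E → F}
    (hf : ∀ i ∈ s, Integrable (f i)) (w : E) :
    𝓕 (fun x ↦ c • ∑ i ∈ s, f i x) w = c • ∑ i ∈ s, 𝓕 (f i) w := by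
  simp only [Real.fourier_eq, smul_comm _ c, integral_smul]
  simp only [smul_sum (r := 𝐞 _)]
  rw [integral_finsetSum s fun i hi ↦ (fourierIntegral_convergent_iff w).2 (hf i hi)]

end Linearity

section RealValued

variable {E : Type*} [NormedAddCommGroup E] [InnerProductSpace ℝ E] [FiniteDimensional ℝ E]
  [MeasurableSpace E] [BorelSpace E] {f φ : E → ℝ}

lemma memLp_two_of_fourier_ofReal_eq (hf : Integrable f) (hf2 : MemLp f 2)
    (hφ : ∀ w, 𝓕 (fun x ↦ (f x : ℂ)) w = φ w) : MemLp φ 2 := by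
  have hfourier : MemLp (fun w ↦ (φ w : ℂ)) 2 :=
    funext hφ ▸ memLp_two_fourier (F := ℂ) hf.ofReal (hf2.ofReal (K := ℂ))
  exact hfourier.re

lemma integral_sq_of_fourier_ofReal_eq (hf : Integrable f) (hf2 : MemLp f 2)
    (hφ : ∀ w, 𝓕 (fun x ↦ (f x : ℂ)) w = φ w) : ∫ x, f x ^ 2 = ∫ w, φ w ^ 2 := by
  simpa [hφ] using (integral_norm_sq_fourier (F := ℂ) hf.ofReal (hf2.ofReal (K := ℂ))).symm

end RealValued

lemma sinc2pi_eq_sinc (x : ℝ) : sinc2pi x = sinc (2 * π * x) := by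
  simp [sinc2pi, sinc, pi_ne_zero]

lemma intervalIntegral_cexp_mul_I (s r u : ℝ) :
    ∫ x in (s - r)..(s + r), Complex.exp (↑(x * u) * Complex.I) =
      2 * r * sinc (r * u) * Complex.exp (↑(s * u) * Complex.I) := by
  have hcenter : ∫ x in -r..r, Complex.exp (↑(x * u) * Complex.I) = 2 * r * sinc (r * u) := by
    rcases eq_or_ne u 0 with rfl | hu
    · simp [two_mul]
    · rw [intervalIntegral.integral_comp_mul_right (fun t : ℝ ↦ Complex.exp (t * Complex.I)) hu,
        neg_mul, integral_exp_mul_I_eq_sinc]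
      have hu' : (u : ℂ) ≠ 0 := Complex.ofReal_ne_zero.2 hu
      simp only [Complex.real_smul, Complex.ofReal_inv, Complex.ofReal_mul]
      field_simp
  calc ∫ x in (s - r)..(s + r), Complex.exp (↑(x * u) * Complex.I)
    _ = ∫ x in -r..r, Complex.exp (↑((x + s) * u) * Complex.I) := by
        rw [intervalIntegral.integral_comp_add_right
          (fun x : ℝ ↦ Complex.exp (↑(x * u) * Complex.I)), add_comm r, neg_add_eq_sub]
    _ = ∫ x in -r..r, Complex.exp (↑(x * u) * Complex.I) * Complex.exp (↑(s * u) * Complex.I) := by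
        simp only [← Complex.exp_add, ← add_mul, ← Complex.ofReal_add]
    _ = _ := by rw [intervalIntegral.integral_mul_const, hcenter]

lemma fourier_indicator_Icc {r : ℝ} (hr : 0 ≤ r) (s w : ℝ) :
    𝓕 ((Set.Icc (s - r) (s + r)).indicator fun _ ↦ (1 : ℂ)) w =
      2 * r * sinc (r * (2 * π * w)) * Complex.exp (↑(s * (-2 * π * w)) * Complex.I) :=
  calc 𝓕 ((Set.Icc (s - r) (s + r)).indicator fun _ ↦ (1 : ℂ)) w
    _ = ∫ x, (Set.Icc (s - r) (s + r)).indicator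
          (fun x : ℝ ↦ Complex.exp (↑(x * (-2 * π * w)) * Complex.I)) x := by
        rw [fourier_real_eq_integral_exp_smul]
        refine integral_congr_ae (.of_forall fun x ↦ ?_)
        by_cases hx : x ∈ Set.Icc (s - r) (s + r)
        · simp only [Set.indicator_of_mem hx, smul_eq_mul, mul_one]
          ring_nf
        · simp only [Set.indicator_of_notMem hx, smul_zero]
    _ = ∫ x in (s - r)..(s + r), Complex.exp (↑(x * (-2 * π * w)) * Complex.I) := by
        rw [integral_indicator measurableSet_Icc, integral_Icc_eq_integral_Ioc,
          ← intervalIntegral.integral_of_le (by linarith)]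
    _ = 2 * r * sinc (r * (2 * π * w)) * Complex.exp (↑(s * (-2 * π * w)) * Complex.I) := by
        rw [intervalIntegral_cexp_mul_I, neg_mul, neg_mul, mul_neg, sinc_neg]

open ProbabilityTheory in
lemma memLp_two_gaussianPDFReal (μ : ℝ) (v : NNReal) : MemLp (gaussianPDFReal μ v) 2 := by
  rw [memLp_two_iff_integrable_sq (integrable_gaussianPDFReal μ v).1]
  simp only [pow_two]
  refine (integrable_gaussianPDFReal μ v).mul_bdd (c := (√(2 * π * v))⁻¹)
    (integrable_gaussianPDFReal μ v).1 (.of_forall fun x ↦ ?_)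
  rw [norm_of_nonneg (gaussianPDFReal_nonneg μ v x)]
  refine mul_le_of_le_one_right (by positivity) (exp_le_one_iff.2 ?_)
  rw [neg_div]
  exact neg_nonpos.2 (by positivity)

open ProbabilityTheory in
lemma fourier_gaussianPDFReal (μ : ℝ) {v : NNReal} (hv : v ≠ 0) (w : ℝ) :
    𝓕 (fun x ↦ (gaussianPDFReal μ v x : ℂ)) w = charFun (gaussianReal μ v) (-2 * π * w) := by
  rw [fourier_real_eq_integral_exp_smul, charFun_apply_real,
    integral_gaussianReal_eq_integral_smul hv]
  refine integral_congr_ae (.of_forall fun x ↦ ?_)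
  simp only [Complex.real_smul, smul_eq_mul, mul_comm (gaussianPDFReal μ v x : ℂ)]
  push_cast
  ring_nf

section Walk

variable {n : ℕ} (a : Fin n → ℝ)

lemma sum_cexp_signedSum (t : ℝ) :
    ∑ ε, Complex.exp (↑(signedSum a ε * t) * Complex.I) = 2 ^ n * ∏ i, (cos (a i * t) : ℂ) := by
  have hexp (ε : Fin n → Bool) : Complex.exp (↑(signedSum a ε * t) * Complex.I) =
      ∏ i, Complex.exp (↑((if ε i then a i else -a i) * t) * Complex.I) := by
    rw [← Complex.exp_sum, signedSum]
    push_cast [Finset.sum_mul]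
    rfl
  calc ∑ ε, Complex.exp (↑(signedSum a ε * t) * Complex.I)
    _ = ∏ i, ∑ b : Bool, Complex.exp (↑((if b then a i else -a i) * t) * Complex.I) := by
        simp only [hexp, Fintype.prod_sum]
    _ = ∏ i, (2 * cos (a i * t) : ℂ) := by
        refine prod_congr rfl fun i _ ↦ ?_
        simp [Complex.two_cos]
    _ = _ := by simp [prod_mul_distrib]

/-- The characteristic function of the smoothed random walk, a `±a i` walk plus an independent
uniform variable on `[-1, 1]`. -/
noncomputable def smoothedCharFun (u : ℝ) : ℝ :=
  sinc u * ∏ i, cos (a i * u)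

lemma integrable_smoothedDensity : Integrable (smoothedDensity a) := by
  unfold smoothedDensity
  refine (integrable_finsetSum _ fun ε _ ↦ Integrable.const_mul ?_ _).const_mul _
  exact (integrable_indicator_iff measurableSet_Icc).2 (by simp)

lemma memLp_two_smoothedDensity : MemLp (smoothedDensity a) 2 := by
  have hbox (s : ℝ) : MemLp ((Set.Icc (s - 1) (s + 1)).indicator fun _ ↦ (1 : ℝ)) 2 :=
    memLp_indicator_const 2 measurableSet_Icc 1 (by simp)
  exact (memLp_finsetSum univ fun ε _ ↦ (hbox (signedSum a ε)).const_mul (1 / 2)).const_mul _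

lemma fourier_smoothedDensity (w : ℝ) :
    𝓕 (fun x ↦ (smoothedDensity a x : ℂ)) w = smoothedCharFun a (2 * π * w) := by
  have hbox (s : ℝ) : Integrable ((Set.Icc (s - 1) (s + 1)).indicator fun _ ↦ (1 : ℂ)) :=
    (integrable_indicator_iff measurableSet_Icc).2 (by simp)
  have hdensity (x : ℝ) : (smoothedDensity a x : ℂ) = (1 / 2 ^ n * (1 / 2) : ℂ) •
      ∑ ε, (Set.Icc (signedSum a ε - 1) (signedSum a ε + 1)).indicator (fun _ ↦ (1 : ℂ)) x := by
    simp only [smoothedDensity, ← mul_sum, Set.indicator_apply]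
    push_cast [apply_ite Complex.ofReal]
    rw [smul_eq_mul, mul_assoc]
  simp only [hdensity]
  rw [fourier_const_smul_finset_sum _ _ fun ε _ ↦ hbox (signedSum a ε)]
  simp only [fourier_indicator_Icc zero_le_one, smul_eq_mul, Complex.ofReal_one, one_mul, mul_one]
  rw [← mul_sum, sum_cexp_signedSum]
  have hcos (i : Fin n) : cos (a i * (-2 * π * w)) = cos (a i * (2 * π * w)) := by
    rw [← cos_neg]
    ring_nf
  simp only [hcos, smoothedCharFun, Complex.ofReal_mul (sinc _), Complex.ofReal_prod]
  generalize ∏ i, (cos (a i * (2 * π * w)) : ℂ) = P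
  field_simp

lemma gaussianDensity_eq_gaussianPDFReal :
    gaussianDensity a = ProbabilityTheory.gaussianPDFReal 0 (∑ i, a i ^ 2).toNNReal := by
  ext x
  simp [gaussianDensity, ProbabilityTheory.gaussianPDFReal, sum_nonneg, sq_nonneg]

lemma integrable_gaussianDensity : Integrable (gaussianDensity a) :=
  gaussianDensity_eq_gaussianPDFReal a ▸ ProbabilityTheory.integrable_gaussianPDFReal _ _

lemma memLp_two_gaussianDensity : MemLp (gaussianDensity a) 2 :=
  gaussianDensity_eq_gaussianPDFReal a ▸ memLp_two_gaussianPDFReal _ _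

lemma integrable_sq_smoothedCharFun :
    Integrable fun w ↦ smoothedCharFun a (2 * π * w) ^ 2 :=
  (memLp_two_of_fourier_ofReal_eq (integrable_smoothedDensity a) (memLp_two_smoothedDensity a)
    (fourier_smoothedDensity a)).integrable_sq

variable {a}

lemma fourier_gaussianDensity (ha : 0 < ∑ i, a i ^ 2) (w : ℝ) :
    𝓕 (fun x ↦ (gaussianDensity a x : ℂ)) w =
      exp (-((∑ i, a i ^ 2) * (2 * π * w) ^ 2) / 2) := by
  rw [gaussianDensity_eq_gaussianPDFReal, fourier_gaussianPDFReal 0 (Real.toNNReal_pos.2 ha).ne',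
    ProbabilityTheory.charFun_gaussianReal, Real.coe_toNNReal _ ha.le]
  push_cast
  ring_nf

lemma fourier_smoothedDensity_sub_gaussianDensity (ha : 0 < ∑ i, a i ^ 2) (w : ℝ) :
    𝓕 (fun x ↦ ((smoothedDensity a x - gaussianDensity a x : ℝ) : ℂ)) w =
      (smoothedCharFun a (2 * π * w) - exp (-((∑ i, a i ^ 2) * (2 * π * w) ^ 2) / 2) : ℝ) := by
  simp only [Complex.ofReal_sub]
  rw [fourier_fun_sub (integrable_smoothedDensity a).ofReal (integrable_gaussianDensity a).ofReal,
    fourier_smoothedDensity, fourier_gaussianDensity ha]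

lemma integrable_sq_smoothedCharFun_sub_exp (ha : 0 < ∑ i, a i ^ 2) :
    Integrable fun w ↦ (smoothedCharFun a (2 * π * w) -
      exp (-((∑ i, a i ^ 2) * (2 * π * w) ^ 2) / 2)) ^ 2 :=
  (memLp_two_of_fourier_ofReal_eq
    ((integrable_smoothedDensity a).sub (integrable_gaussianDensity a))
    ((memLp_two_smoothedDensity a).sub (memLp_two_gaussianDensity a))
    (fourier_smoothedDensity_sub_gaussianDensity ha)).integrable_sq

lemma integral_sq_smoothedDensity_sub_gaussianDensity (ha : 0 < ∑ i, a i ^ 2) :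
    ∫ x, (smoothedDensity a x - gaussianDensity a x) ^ 2 =
      ∫ w, (smoothedCharFun a (2 * π * w) -
        exp (-((∑ i, a i ^ 2) * (2 * π * w) ^ 2) / 2)) ^ 2 :=
  integral_sq_of_fourier_ofReal_eq
    ((integrable_smoothedDensity a).sub (integrable_gaussianDensity a))
    ((memLp_two_smoothedDensity a).sub (memLp_two_gaussianDensity a))
    (fourier_smoothedDensity_sub_gaussianDensity ha)

end Walk

lemma mul_cos_le_sin {x : ℝ} (h₀ : 0 ≤ x) (h₁ : x ≤ π / 2) : x * cos x ≤ sin x := by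
  rcases h₁.lt_or_eq with h | rfl
  · have hcos : 0 < cos x := cos_pos_of_mem_Ioo ⟨by linarith [pi_pos], h⟩
    calc x * cos x ≤ tan x * cos x := by gcongr; exact le_tan h₀ h
      _ = sin x := tan_mul_cos hcos.ne'
  · simp

lemma antitoneOn_cos_mul_exp_sq_div_two :
    AntitoneOn (fun x ↦ cos x * exp (x ^ 2 / 2)) (Set.Icc 0 (π / 2)) := by
  have hderiv (x : ℝ) : HasDerivAt (fun x ↦ cos x * exp (x ^ 2 / 2))
      ((x * cos x - sin x) * exp (x ^ 2 / 2)) x := by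
    convert! (hasDerivAt_cos x).mul (((hasDerivAt_pow 2 x).div_const 2).exp) using 1
    simp only [Nat.cast_ofNat, Nat.add_one_sub_one, pow_one]
    ring
  refine antitoneOn_of_deriv_nonpos (convex_Icc _ _)
    (fun x _ ↦ (hderiv x).continuousAt.continuousWithinAt)
    (fun x _ ↦ (hderiv x).differentiableAt.differentiableWithinAt) fun x hx ↦ ?_
  rw [interior_Icc] at hx
  rw [(hderiv x).deriv]
  exact mul_nonpos_of_nonpos_of_nonneg (sub_nonpos.2 (mul_cos_le_sin hx.1.le hx.2.le))
    (exp_pos _).le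

lemma cos_mul_exp_sq_div_two_le_one {x : ℝ} (hx : |x| ≤ π / 2) : cos x * exp (x ^ 2 / 2) ≤ 1 := by
  have h : cos |x| * exp (|x| ^ 2 / 2) ≤ cos 0 * exp (0 ^ 2 / 2) :=
    antitoneOn_cos_mul_exp_sq_div_two ⟨le_rfl, by positivity⟩ ⟨abs_nonneg x, hx⟩ (abs_nonneg x)
  simpa using h

lemma cos_nonneg_of_abs_le {x : ℝ} (hx : |x| ≤ π / 2) : 0 ≤ cos x :=
  cos_nonneg_of_mem_Icc ⟨by linarith [neg_abs_le x], (le_abs_self x).trans hx⟩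

lemma one_sub_pow_four_le_cos_mul_exp {x : ℝ} (hx : |x| ≤ π / 2) :
    1 - x ^ 4 / 4 ≤ cos x * exp (x ^ 2 / 2) :=
  calc 1 - x ^ 4 / 4 = (1 - x ^ 2 / 2) * (x ^ 2 / 2 + 1) := by ring
    _ ≤ cos x * exp (x ^ 2 / 2) := by
      gcongr
      exacts [cos_nonneg_of_abs_le hx, one_sub_sq_div_two_le_cos, add_one_le_exp _]

lemma one_sub_sq_div_six_le_sinc (x : ℝ) : 1 - x ^ 2 / 6 ≤ sinc x := by
  rcases eq_or_ne x 0 with rfl | hx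
  · simp
  · have h : 1 - sinc x ≤ x ^ 2 / 6 :=
      calc 1 - sinc x = (x - sin x) / x := by rw [sinc_of_ne_zero hx]; field_simp
      _ ≤ |x - sin x| / |x| := abs_div (x - sin x) x ▸ le_abs_self _
      _ ≤ |x| ^ 3 / 6 / |x| := by gcongr; exact abs_sub_sin_le x
      _ = x ^ 2 / 6 := by rw [← sq_abs]; field_simp
    linarith

lemma one_sub_sum_le_prod {ι R : Type*} [CommRing R] [LinearOrder R] [IsStrictOrderedRing R]
    (s : Finset ι) {f : ι → R} (h₀ : ∀ i ∈ s, 0 ≤ f i) (h₁ : ∀ i ∈ s, f i ≤ 1) :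
    1 - ∑ i ∈ s, (1 - f i) ≤ ∏ i ∈ s, f i := by
  induction s using Finset.cons_induction with
  | empty => simp
  | cons j s hj ih =>
    rw [sum_cons, prod_cons]
    simp only [mem_cons, forall_eq_or_imp] at h₀ h₁
    have hsum : 0 ≤ ∑ i ∈ s, (1 - f i) := sum_nonneg fun i hi ↦ sub_nonneg.2 (h₁.2 i hi)
    nlinarith [ih h₀.2 h₁.2, h₀.1, h₁.1]

section Products

variable {ι : Type*} (s : Finset ι) {t : ι → ℝ}

lemma prod_cos_mul_exp_eq_prod :
    (∏ i ∈ s, cos (t i)) * exp ((∑ i ∈ s, t i ^ 2) / 2) =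
      ∏ i ∈ s, cos (t i) * exp (t i ^ 2 / 2) := by
  rw [prod_mul_distrib, sum_div, exp_sum]

lemma prod_cos_mul_exp_nonneg (ht : ∀ i ∈ s, |t i| ≤ π / 2) :
    0 ≤ (∏ i ∈ s, cos (t i)) * exp ((∑ i ∈ s, t i ^ 2) / 2) :=
  mul_nonneg (prod_nonneg fun i hi ↦ cos_nonneg_of_abs_le (ht i hi)) (exp_pos _).le

lemma prod_cos_mul_exp_le_one (ht : ∀ i ∈ s, |t i| ≤ π / 2) :
    (∏ i ∈ s, cos (t i)) * exp ((∑ i ∈ s, t i ^ 2) / 2) ≤ 1 := by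
  rw [prod_cos_mul_exp_eq_prod]
  exact prod_le_one (fun i hi ↦ mul_nonneg (cos_nonneg_of_abs_le (ht i hi)) (exp_pos _).le)
    fun i hi ↦ cos_mul_exp_sq_div_two_le_one (ht i hi)

lemma one_sub_sum_pow_four_le_prod_cos_mul_exp (ht : ∀ i ∈ s, |t i| ≤ π / 2) :
    1 - (∑ i ∈ s, t i ^ 4) / 4 ≤ (∏ i ∈ s, cos (t i)) * exp ((∑ i ∈ s, t i ^ 2) / 2) := by
  rw [prod_cos_mul_exp_eq_prod]
  calc 1 - (∑ i ∈ s, t i ^ 4) / 4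
    _ ≤ 1 - ∑ i ∈ s, (1 - cos (t i) * exp (t i ^ 2 / 2)) := by
        rw [sum_div]
        gcongr 1 - ∑ i ∈ s, ?_ with i hi
        linarith [one_sub_pow_four_le_cos_mul_exp (ht i hi)]
    _ ≤ ∏ i ∈ s, cos (t i) * exp (t i ^ 2 / 2) := one_sub_sum_le_prod s
        (fun i hi ↦ mul_nonneg (cos_nonneg_of_abs_le (ht i hi)) (exp_pos _).le)
        fun i hi ↦ cos_mul_exp_sq_div_two_le_one (ht i hi)

end Products

section Pointwise

variable {n : ℕ} {a : Fin n → ℝ} {A u : ℝ}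

lemma sum_mul_pow_four_le (hA : ∀ i, |a i| ≤ A) :
    ∑ i, (a i * u) ^ 4 ≤ A ^ 2 * u ^ 2 * ((∑ i, a i ^ 2) * u ^ 2) := by
  rw [sum_mul, mul_sum]
  gcongr with i
  calc (a i * u) ^ 4 = |a i| ^ 2 * u ^ 2 * (a i ^ 2 * u ^ 2) := by rw [sq_abs]; ring
    _ ≤ A ^ 2 * u ^ 2 * (a i ^ 2 * u ^ 2) := by gcongr; exact hA i

lemma abs_smoothedCharFun_le_one (a : Fin n → ℝ) (u : ℝ) : |smoothedCharFun a u| ≤ 1 := by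
  rw [smoothedCharFun, abs_mul, abs_prod]
  exact mul_le_one₀ (abs_sinc_le_one u) (prod_nonneg fun _ _ ↦ abs_nonneg _)
    (prod_le_one (fun _ _ ↦ abs_nonneg _) fun _ _ ↦ abs_cos_le_one _)

lemma abs_smoothedCharFun_sub_exp_le (hA : ∀ i, |a i| ≤ A) (hu : A * |u| ≤ π / 2) :
    |smoothedCharFun a u - exp (-((∑ i, a i ^ 2) * u ^ 2) / 2)| ≤
      (A ^ 2 * u ^ 2 * ((∑ i, a i ^ 2) * u ^ 2) / 4 + u ^ 2 / 6) *
        exp (-((∑ i, a i ^ 2) * u ^ 2) / 2) := by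
  set y := (∑ i, a i ^ 2) * u ^ 2 with hy
  have ht (i : Fin n) (_ : i ∈ univ) : |a i * u| ≤ π / 2 := by
    rw [abs_mul]
    exact (mul_le_mul_of_nonneg_right (hA i) (abs_nonneg u)).trans hu
  have hsum : ∑ i, (a i * u) ^ 2 = y := by simp only [hy, mul_pow, sum_mul]
  have hP₀ := prod_cos_mul_exp_nonneg univ ht
  have hP₁ := prod_cos_mul_exp_le_one univ ht
  have hP := one_sub_sum_pow_four_le_prod_cos_mul_exp univ ht
  rw [hsum] at hP₀ hP₁ hP
  set P := (∏ i, cos (a i * u)) * exp (y / 2) with hP_def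
  have hfactor : smoothedCharFun a u = sinc u * P * exp (-y / 2) := by
    rw [smoothedCharFun, hP_def, mul_assoc, mul_assoc, ← exp_add]
    simp [← add_div]
  have hupper : sinc u * P ≤ 1 := mul_le_one₀ (sinc_le_one u) hP₀ hP₁
  have hlower : 1 - sinc u * P ≤ A ^ 2 * u ^ 2 * y / 4 + u ^ 2 / 6 := by
    nlinarith [sum_mul_pow_four_le (u := u) hA, one_sub_sq_div_six_le_sinc u, sq_nonneg u]
  rw [hfactor, ← sub_one_mul, abs_mul, abs_of_pos (exp_pos _), abs_sub_comm,
    abs_of_nonneg (sub_nonneg.2 hupper)]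
  gcongr

lemma abs_smoothedCharFun_sub_exp_le_mul_exp (hA₁ : 1 ≤ A) (hA : ∀ i, |a i| ≤ A)
    (hV : 0 < ∑ i, a i ^ 2) (hu : A * |u| ≤ π / 2) :
    |smoothedCharFun a u - exp (-((∑ i, a i ^ 2) * u ^ 2) / 2)| ≤
      8 * (A ^ 2 / ∑ i, a i ^ 2) * exp (-((∑ i, a i ^ 2) * u ^ 2) / 4) := by
  have hcore := abs_smoothedCharFun_sub_exp_le hA hu
  set V := ∑ i, a i ^ 2
  set y := V * u ^ 2 with hy
  have hy₀ : 0 ≤ y := by positivity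
  have hAu : A ^ 2 * u ^ 2 = A ^ 2 / V * y := by rw [hy]; field_simp
  have hu_sq : u ^ 2 ≤ A ^ 2 / V * y :=
    (le_mul_of_one_le_left (sq_nonneg u) (one_le_pow₀ hA₁)).trans_eq hAu
  have hpoly : y ^ 2 / 4 + y / 6 ≤ 8 * exp (y / 4) := by
    linarith [quadratic_le_exp_of_nonneg (div_nonneg hy₀ zero_le_four)]
  calc |smoothedCharFun a u - exp (-y / 2)|
    _ ≤ (A ^ 2 / V * y * y / 4 + A ^ 2 / V * y / 6) * exp (-y / 2) :=
        hcore.trans (by rw [hAu]; gcongr)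
    _ = A ^ 2 / V * (y ^ 2 / 4 + y / 6) * exp (-y / 2) := by ring
    _ ≤ A ^ 2 / V * (8 * exp (y / 4)) * exp (-y / 2) := by gcongr
    _ = 8 * (A ^ 2 / V) * (exp (y / 4) * exp (-y / 2)) := by ring
    _ = 8 * (A ^ 2 / V) * exp (-y / 4) := by rw [← exp_add]; ring_nf

lemma sq_smoothedCharFun_sub_exp_le (hA₁ : 1 ≤ A) (hA : ∀ i, |a i| ≤ A)
    (hV : 0 < ∑ i, a i ^ 2) (hu : A * |u| ≤ π / 2) :
    (smoothedCharFun a u - exp (-((∑ i, a i ^ 2) * u ^ 2) / 2)) ^ 2 ≤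
      96 * (A ^ 2 / ∑ i, a i ^ 2) ^ 2 * exp (-((∑ i, a i ^ 2) * u ^ 2) / 4) := by
  have hcore := abs_smoothedCharFun_sub_exp_le_mul_exp hA₁ hA hV hu
  set V := ∑ i, a i ^ 2
  set y := V * u ^ 2
  have hy₀ : 0 ≤ y := by positivity
  have hexp : exp (-y / 4) ≤ 1 := exp_le_one_iff.2 (by linarith)
  calc (smoothedCharFun a u - exp (-y / 2)) ^ 2
    _ ≤ (8 * (A ^ 2 / V) * exp (-y / 4)) ^ 2 := sq_le_sq' (abs_le.1 hcore).1 (abs_le.1 hcore).2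
    _ = 64 * (A ^ 2 / V) ^ 2 * exp (-y / 4) * exp (-y / 4) := by ring
    _ ≤ 96 * (A ^ 2 / V) ^ 2 * exp (-y / 4) * 1 := by gcongr; norm_num
    _ = 96 * (A ^ 2 / V) ^ 2 * exp (-y / 4) := mul_one _

lemma abs_sq_sub_sq_sub_le {x e : ℝ} (hx : |x| ≤ 1) (he₀ : 0 ≤ e) (he₁ : e ≤ 1) :
    |(x - e) ^ 2 - x ^ 2| ≤ 3 * e :=
  calc |(x - e) ^ 2 - x ^ 2| = e * |e - 2 * x| := by
        rw [← abs_of_nonneg he₀, ← abs_mul, abs_of_nonneg he₀]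
        ring_nf
    _ ≤ e * 3 := by
        gcongr
        rw [abs_le] at hx ⊢
        constructor <;> linarith
    _ = 3 * e := mul_comm _ _

lemma abs_sq_smoothedCharFun_sub_exp_sub_sq_le (hV : 0 < ∑ i, a i ^ 2)
    (hu : π / 2 ≤ A * |u|) :
    |(smoothedCharFun a u - exp (-((∑ i, a i ^ 2) * u ^ 2) / 2)) ^ 2 - smoothedCharFun a u ^ 2| ≤
      96 * (A ^ 2 / ∑ i, a i ^ 2) ^ 2 * exp (-((∑ i, a i ^ 2) * u ^ 2) / 4) := by
  set V := ∑ i, a i ^ 2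
  set y := V * u ^ 2 with hy
  have hy₀ : 0 ≤ y := by positivity
  have hone : 1 ≤ A ^ 2 / V * y :=
    calc (1 : ℝ) ≤ (A * |u|) ^ 2 := one_le_pow₀ (by linarith [pi_gt_three])
      _ = A ^ 2 / V * y := by rw [mul_pow, sq_abs, hy]; field_simp
  have hpoly : y ^ 2 ≤ 32 * exp (y / 4) := by
    linarith [quadratic_le_exp_of_nonneg (div_nonneg hy₀ zero_le_four)]
  calc |(smoothedCharFun a u - exp (-y / 2)) ^ 2 - smoothedCharFun a u ^ 2|
    _ ≤ 3 * exp (-y / 2) := abs_sq_sub_sq_sub_le (abs_smoothedCharFun_le_one a u) (exp_pos _).le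
        (exp_le_one_iff.2 (by linarith))
    _ ≤ 3 * exp (-y / 2) * (A ^ 2 / V * y) ^ 2 :=
        le_mul_of_one_le_right (by positivity) (one_le_pow₀ hone)
    _ = 3 * (A ^ 2 / V) ^ 2 * (exp (-y / 2) * y ^ 2) := by ring
    _ ≤ 3 * (A ^ 2 / V) ^ 2 * (exp (-y / 2) * (32 * exp (y / 4))) := by gcongr
    _ = 96 * (A ^ 2 / V) ^ 2 * (exp (-y / 2) * exp (y / 4)) := by ring
    _ = 96 * (A ^ 2 / V) ^ 2 * exp (-y / 4) := by rw [← exp_add]; ring_nf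

end Pointwise

section Separation

lemma card_le_of_separated_of_mem_Ico {ι : Type*} (s : Finset ι) {f : ι → ℝ} {c d : ℝ}
    (k : ℕ) (hd : 0 < d) (hsep : ∀ i ∈ s, ∀ j ∈ s, i ≠ j → d ≤ |f i - f j|)
    (hf : ∀ i ∈ s, f i ∈ Set.Ico c (c + k * d)) : #s ≤ k := by
  have hnonneg (i) (hi : i ∈ s) : 0 ≤ (f i - c) / d := div_nonneg (sub_nonneg.2 (hf i hi).1) hd.le
  rw [← card_range k]
  refine card_le_card_of_injOn (fun i ↦ ⌊(f i - c) / d⌋₊) (fun i hi ↦ ?_) fun i hi j hj hij ↦ ?_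
  · rw [coe_range, Set.mem_Iio, Nat.floor_lt (hnonneg i hi), div_lt_iff₀ hd]
    linarith [(hf i hi).2]
  · by_contra hne
    have hlt : |(f i - c) / d - (f j - c) / d| < 1 :=
      Int.abs_sub_lt_one_of_floor_eq_floor (by
        rw [← Int.natCast_floor_eq_floor (hnonneg i hi),
          ← Int.natCast_floor_eq_floor (hnonneg j hj)]
        exact congrArg _ hij)
    rw [← sub_div, sub_sub_sub_cancel_right, abs_div, abs_of_pos hd, div_lt_one hd] at hlt
    exact hlt.not_ge (hsep i hi j hj hne)

variable {n : ℕ} {a : Fin n → ℝ}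

lemma signedSum_eq_two_mul_sum_sub (a : Fin n → ℝ) (ε : Fin n → Bool) :
    signedSum a ε = 2 * ∑ i with ε i, a i - ∑ i, a i := by
  rw [signedSum, sum_filter, mul_sum, ← sum_sub_distrib]
  refine sum_congr rfl fun i _ ↦ ?_
  split_ifs <;> ring

lemma SepSums.two_le_abs_signedSum_sub (hs : SepSums a) {ε ε' : Fin n → Bool} (hne : ε ≠ ε') :
    2 ≤ |signedSum a ε - signedSum a ε'| := by
  have hsets : univ.filter (fun i ↦ ε i = true) ≠ univ.filter (fun i ↦ ε' i = true) := by
    contrapose! hne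
    ext i
    simpa using congrArg (i ∈ ·) hne
  rw [signedSum_eq_two_mul_sum_sub, signedSum_eq_two_mul_sum_sub, sub_sub_sub_cancel_right,
    ← mul_sub, abs_mul, abs_two]
  linarith [hs _ _ hsets]

lemma SepSums.one_le_abs (hs : SepSums a) (i : Fin n) : 1 ≤ |a i| := by
  simpa using hs {i} ∅ (singleton_ne_empty i)

lemma signedSum_cons (a : Fin (n + 1) → ℝ) (b : Bool) (ε : Fin n → Bool) :
    signedSum a (Fin.cons b ε) = (if b then a 0 else -a 0) + signedSum (Fin.tail a) ε := by
  simp [signedSum, Fin.sum_univ_succ, Fin.tail]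

lemma sum_signedSum_sq (a : Fin n → ℝ) :
    ∑ ε, signedSum a ε ^ 2 = 2 ^ n * ∑ i, a i ^ 2 := by
  induction n with
  | zero => simp [signedSum]
  | succ n ih =>
    calc ∑ ε, signedSum a ε ^ 2
      _ = ∑ b, ∑ ε, signedSum a (Fin.cons b ε) ^ 2 := by
          rw [← Fintype.sum_prod_type' fun b ε ↦ signedSum a (Fin.cons b ε) ^ 2]
          exact (Fintype.sum_equiv (Fin.consEquiv fun _ ↦ Bool) _ _ fun _ ↦ rfl).symm
      _ = ∑ ε, 2 * (a 0 ^ 2 + signedSum (Fin.tail a) ε ^ 2) := by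
          rw [Fintype.sum_bool, ← sum_add_distrib]
          refine sum_congr rfl fun ε _ ↦ ?_
          simp only [signedSum_cons, if_true, Bool.false_eq_true, if_false]
          ring
      _ = 2 ^ (n + 1) * ∑ i, a i ^ 2 := by
          rw [← mul_sum, sum_add_distrib, ih, Fin.sum_univ_succ]
          simp only [sum_const, card_univ, Fintype.card_pi_const, Fintype.card_bool, nsmul_eq_mul,
            Nat.cast_pow, Nat.cast_ofNat, Fin.tail]
          ring

lemma SepSums.card_abs_signedSum_lt_le (hs : SepSums a) (k : ℕ) :
    #{ε | |signedSum a ε| < k} ≤ k := by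
  refine card_le_of_separated_of_mem_Ico _ (c := -k) (d := 2) k two_pos
    (fun ε _ ε' _ hne ↦ hs.two_le_abs_signedSum_sub hne) fun ε hε ↦ ?_
  have hlt := abs_lt.1 (mem_filter.1 hε).2
  exact ⟨hlt.1.le, by linarith [hlt.2]⟩

lemma SepSums.four_pow_le_sum_sq (hs : SepSums a) (hn : n ≠ 0) : 4 ^ n / 8 ≤ ∑ i, a i ^ 2 := by
  obtain ⟨m, rfl⟩ := Nat.exists_eq_add_one_of_ne_zero hn
  have hcard : 2 ^ m ≤ #{ε | ¬ |signedSum a ε| < (2 ^ m : ℕ)} := by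
    have htotal := card_filter_add_card_filter_not (s := univ)
      fun ε ↦ |signedSum a ε| < (2 ^ m : ℕ)
    rw [card_univ, Fintype.card_pi_const, Fintype.card_bool, pow_succ] at htotal
    have hsmall := hs.card_abs_signedSum_lt_le (2 ^ m)
    omega
  have hmoment : (2 ^ m : ℝ) * (2 ^ m) ^ 2 ≤ 2 ^ (m + 1) * ∑ i, a i ^ 2 :=
    calc (2 ^ m : ℝ) * (2 ^ m) ^ 2
      _ ≤ #{ε | ¬ |signedSum a ε| < (2 ^ m : ℕ)} * (2 ^ m) ^ 2 := by
          gcongr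
          exact_mod_cast hcard
      _ ≤ ∑ ε with ¬ |signedSum a ε| < (2 ^ m : ℕ), signedSum a ε ^ 2 := by
          rw [← nsmul_eq_mul]
          refine card_nsmul_le_sum _ _ _ fun ε hε ↦ ?_
          have hge := not_lt.1 (mem_filter.1 hε).2
          rw [← sq_abs (signedSum a ε)]
          push_cast at hge
          gcongr
      _ ≤ ∑ ε, signedSum a ε ^ 2 :=
          sum_le_sum_of_subset_of_nonneg (filter_subset _ _) fun _ _ _ ↦ sq_nonneg _
      _ = 2 ^ (m + 1) * ∑ i, a i ^ 2 := sum_signedSum_sq a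
  have hfour : (4 : ℝ) ^ (m + 1) = 4 * (2 ^ m) ^ 2 := by
    rw [pow_succ, ← pow_mul', pow_mul]
    norm_num [mul_comm]
  rw [pow_succ (2 : ℝ), mul_assoc, mul_le_mul_iff_right₀ (by positivity)] at hmoment
  linarith

end Separation

section Conclusion

variable {n : ℕ} {a : Fin n → ℝ} {A : ℝ}

lemma abs_sq_sub_indicator_le (hA₁ : 1 ≤ A) (hA : ∀ i, |a i| ≤ A) (hV : 0 < ∑ i, a i ^ 2) (x : ℝ) :
    |(smoothedCharFun a (2 * π * x) - exp (-((∑ i, a i ^ 2) * (2 * π * x) ^ 2) / 2)) ^ 2 -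
        {x : ℝ | 1 / (4 * A) ≤ |x|}.indicator (fun x ↦ smoothedCharFun a (2 * π * x) ^ 2) x| ≤
      96 * (A ^ 2 / ∑ i, a i ^ 2) ^ 2 * exp (-(π ^ 2 * ∑ i, a i ^ 2) * x ^ 2) := by
  have hexp : exp (-(π ^ 2 * ∑ i, a i ^ 2) * x ^ 2) =
      exp (-((∑ i, a i ^ 2) * (2 * π * x) ^ 2) / 4) := by ring_nf
  have hthreshold : π / 2 ≤ A * |2 * π * x| ↔ 1 / (4 * A) ≤ |x| := by
    have hscale : A * |2 * π * x| = π / 2 * (|x| * (4 * A)) := by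
      rw [abs_mul, abs_of_pos two_pi_pos]
      ring
    rw [hscale, le_mul_iff_one_le_right (by positivity), div_le_iff₀ (by positivity)]
  rw [hexp]
  by_cases hx : 1 / (4 * A) ≤ |x|
  · rw [Set.indicator_of_mem (s := {x : ℝ | 1 / (4 * A) ≤ |x|}) hx]
    exact abs_sq_smoothedCharFun_sub_exp_sub_sq_le hV (hthreshold.2 hx)
  · rw [Set.indicator_of_notMem (by simpa using hx), sub_zero, abs_of_nonneg (sq_nonneg _)]
    exact sq_smoothedCharFun_sub_exp_le hA₁ hA hV (le_of_not_ge (mt hthreshold.1 hx))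

lemma abs_integral_sq_sub_setIntegral_le (hA₁ : 1 ≤ A) (hA : ∀ i, |a i| ≤ A)
    (hV : 0 < ∑ i, a i ^ 2) :
    |(∫ w, (smoothedCharFun a (2 * π * w) -
          exp (-((∑ i, a i ^ 2) * (2 * π * w) ^ 2) / 2)) ^ 2) -
        ∫ w in {w : ℝ | 1 / (4 * A) ≤ |w|}, smoothedCharFun a (2 * π * w) ^ 2| ≤
      96 * (A ^ 2 / ∑ i, a i ^ 2) ^ 2 * √(π / (π ^ 2 * ∑ i, a i ^ 2)) := by
  have hmeas : MeasurableSet {w : ℝ | 1 / (4 * A) ≤ |w|} :=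
    measurableSet_le measurable_const measurable_id.abs
  have hgauss : Integrable fun w : ℝ ↦ exp (-(π ^ 2 * ∑ i, a i ^ 2) * w ^ 2) :=
    integrable_exp_neg_mul_sq (by positivity)
  rw [← integral_indicator hmeas, ← integral_sub (integrable_sq_smoothedCharFun_sub_exp hV)
    ((integrable_sq_smoothedCharFun a).indicator hmeas), ← integral_gaussian, ← integral_const_mul]
  exact norm_integral_le_of_norm_le (hgauss.const_mul _) <|
    .of_forall fun w ↦ (norm_eq_abs _).trans_le (abs_sq_sub_indicator_le hA₁ hA hV w)

lemma sq_sinc2pi_mul_prod_sq_cos (a : Fin n → ℝ) (x : ℝ) :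
    sinc2pi x ^ 2 * ∏ i, cos (2 * π * a i * x) ^ 2 = smoothedCharFun a (2 * π * x) ^ 2 := by
  rw [prod_pow, ← mul_pow, sinc2pi_eq_sinc, smoothedCharFun]
  simp only [mul_left_comm, mul_assoc]

lemma SepSums.sqrt_pi_div_le (hs : SepSums a) (hn : n ≠ 0) :
    √(π / (π ^ 2 * ∑ i, a i ^ 2)) ≤ 2 * 2 ^ (-(n : ℝ)) := by
  have hV := hs.four_pow_le_sum_sq hn
  have hV₀ : 0 < ∑ i, a i ^ 2 := hV.trans_lt' (by positivity)
  have hfour : (4 : ℝ) ^ n = (2 ^ n) ^ 2 := by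
    rw [← pow_mul', pow_mul]
    norm_num
  rw [rpow_neg two_pos.le, rpow_natCast, ← div_eq_mul_inv]
  refine sqrt_le_iff.2 ⟨by positivity, ?_⟩
  rw [div_pow, ← hfour, div_le_div_iff₀ (by positivity) (by positivity)]
  nlinarith [pi_gt_three, mul_pos pi_pos hV₀]

theorem stmt_6_general (hn : n ≠ 0) (hs : SepSums a) (hA : ∀ i, |a i| ≤ A) :
    |(∫ x, (smoothedDensity a x - gaussianDensity a x) ^ 2) -
        ∫ x in {x : ℝ | 1 / (4 * A) ≤ |x|},
          sinc2pi x ^ 2 * ∏ i, cos (2 * π * a i * x) ^ 2| ≤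
      192 * (A ^ 2 / ∑ i, a i ^ 2) ^ 2 * 2 ^ (-(n : ℝ)) := by
  have hA₁ : 1 ≤ A := (hs.one_le_abs ⟨0, n.pos_of_ne_zero hn⟩).trans (hA _)
  have hV : 0 < ∑ i, a i ^ 2 := (hs.four_pow_le_sum_sq hn).trans_lt' (by positivity)
  simp only [sq_sinc2pi_mul_prod_sq_cos]
  rw [integral_sq_smoothedDensity_sub_gaussianDensity hV]
  calc _ ≤ 96 * (A ^ 2 / ∑ i, a i ^ 2) ^ 2 * √(π / (π ^ 2 * ∑ i, a i ^ 2)) :=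
        abs_integral_sq_sub_setIntegral_le hA₁ hA hV
    _ ≤ 96 * (A ^ 2 / ∑ i, a i ^ 2) ^ 2 * (2 * 2 ^ (-(n : ℝ))) := by
        gcongr
        exact hs.sqrt_pi_div_le hn
    _ = 192 * (A ^ 2 / ∑ i, a i ^ 2) ^ 2 * 2 ^ (-(n : ℝ)) := by ring

end Conclusion

lemma sq_div_le_of_le_mul_rpow {x v c : ℝ} {n : ℕ} (hc : 0 ≤ c) (hx : 0 ≤ x)
    (hv : 0 ≤ v) (h : x ≤ c * (n : ℝ) ^ (-(1 / 2) : ℝ) * v) : (x / v) ^ 2 ≤ c ^ 2 / n :=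
  calc (x / v) ^ 2 ≤ (c * (n : ℝ) ^ (-(1 / 2) : ℝ)) ^ 2 := by
        gcongr
        exact div_le_of_le_mul₀ hv (by positivity) h
    _ = c ^ 2 / n := by
        rw [mul_pow, ← rpow_mul_natCast n.cast_nonneg]
        norm_num [rpow_neg_one, div_eq_mul_inv]

theorem stmt_6 (c δ : ℝ) (hc : 0 < c) (hδ : 0 < δ) :
    ∃ N : ℕ, ∀ n : ℕ, N ≤ n → ∀ a : Fin n → ℝ, (∀ i, 0 < a i) →
      SepSums a → ∀ A : ℝ, IsGreatest (Set.range a) A →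
      A ^ 2 ≤ c * (n : ℝ) ^ (-(1/2) : ℝ) * ∑ i, (a i) ^ 2 →
      |(∫ x : ℝ, (smoothedDensity a x - gaussianDensity a x) ^ 2) -
          ∫ x in {x : ℝ | 1 / (4 * A) ≤ |x|},
            (sinc2pi x) ^ 2 * ∏ i, (Real.cos (2 * π * a i * x)) ^ 2| ≤
        δ * 2 ^ (-(n : ℝ)) := by
  refine ⟨⌈192 * c ^ 2 / δ⌉₊, fun n hN a ha hs A hA hle ↦ ?_⟩
  obtain ⟨⟨j, -⟩, hmax⟩ := hA
  have hn : 0 < n := Fin.pos j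
  have habs (i : Fin n) : |a i| ≤ A := (abs_of_pos (ha i)).trans_le (hmax ⟨i, rfl⟩)
  refine (stmt_6_general hn.ne' hs habs).trans ?_
  gcongr
  calc 192 * (A ^ 2 / ∑ i, a i ^ 2) ^ 2 ≤ 192 * (c ^ 2 / n) := by
        gcongr
        exact sq_div_le_of_le_mul_rpow hc.le (sq_nonneg A)
          (sum_nonneg fun i _ ↦ sq_nonneg _) hle
    _ ≤ δ := by
        rw [← mul_div_assoc, div_le_comm₀ (by positivity) hδ]
        exact Nat.ceil_le.1 hN
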